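/- Let Ω ⊂ ℝ^N be open and bounded, let F : ℝ × ℝ^N → ℝ be of class C³, let u : ℝ^N → ℝ be bounded and of class C³ with all partial derivatives up to order 3 bounded, and let η, ζ : ℝ^N → ℝ^N be bounded and of class C³ with all partial derivatives up to order 3 bounded. Define Φ_t(x) := x + t·η(x) + (t²/2)·ζ(x), let τ > 0 be such that Φ_t is a bijection of ℝ^N for |t| < τ, set u_t(y) := u(Φ_t⁻¹(y)), and define 𝔄₁(t) := ∫_Ω F(u_t(y), ∇u_t(y)) dy for |t| < τ. Then 𝔄₁ is twice differentiable at t = 0 and 𝔄₁''(0) = ∫_Ω [ F_{zz}(∇u·η)² + 2 Σ_i F_{z p_i}(∇u·η) ∂_i(∇u·η) + Σ_{i,j} F_{p_i p_j} ∂_i(∇u·η) ∂_j(∇u·η) ] dx + ∫_Ω [ F_z X₀ + Σ_i F_{p_i} ∂_i X₀ ] dx, where all derivatives of F are evaluated at (u, ∇u) and X₀ := Σ_{i,j} ∂²u/∂x_i∂x_j η^i η^j + Σ_i ∂u/∂x_i (2((η·∇)η)^i − ζ^i). -/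

import Mathlib

open Filter MeasureTheory Topology
open scoped RealInnerProductSpace

namespace PaperAC

/-- The partial derivative `∂f/∂x_j` of a scalar function on `ℝ^N`. -/
noncomputable def pdv {N : ℕ} (f : (Fin N → ℝ) → ℝ) (j : Fin N) (x : Fin N → ℝ) : ℝ :=
  fderiv ℝ f x (Pi.single j 1)

/-- The advection field `(η·∇)η`, with components `((η·∇)η)^i = ∑_j η^j ∂η^i/∂x_j`. -/
noncomputable def advf {N : ℕ} (η : (Fin N → ℝ) → (Fin N → ℝ)) (x : Fin N → ℝ) :
    Fin N → ℝ :=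
  fun i => ∑ j, η x j * pdv (fun z => η z i) j x

/-- The gradient `∇u` of a scalar function on `ℝ^N`. -/
noncomputable def grad {N : ℕ} (u : (Fin N → ℝ) → ℝ) (x : Fin N → ℝ) : Fin N → ℝ :=
  fun i => pdv u i x

/-- `X₀ := (D²u·η, η) + (∇u, 2(η·∇)η − ζ)`. -/
noncomputable def X0 {N : ℕ} (u : (Fin N → ℝ) → ℝ) (η ζ : (Fin N → ℝ) → (Fin N → ℝ))
    (y : Fin N → ℝ) : ℝ :=
  (∑ i, ∑ j, pdv (pdv u i) j y * η y i * η y j)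
    + ∑ i, pdv u i y * (2 * advf η y i - ζ y i)

/-- `−∇u·η`. -/
noncomputable def nGradDot {N : ℕ} (u : (Fin N → ℝ) → ℝ) (η : (Fin N → ℝ) → (Fin N → ℝ))
    (x : Fin N → ℝ) : ℝ :=
  -(∑ i, pdv u i x * η x i)

/-- `F_z`, the partial derivative of `F = F(z,p)` in the scalar variable. -/
noncomputable def Fz {N : ℕ} (F : ℝ × (Fin N → ℝ) → ℝ) (z : ℝ) (p : Fin N → ℝ) : ℝ :=
  fderiv ℝ F (z, p) (1, 0)

/-- `F_{p_i}`. -/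
noncomputable def Fp {N : ℕ} (F : ℝ × (Fin N → ℝ) → ℝ) (i : Fin N) (z : ℝ) (p : Fin N → ℝ) :
    ℝ :=
  fderiv ℝ F (z, p) (0, Pi.single i 1)

/-- `F_{zz}`. -/
noncomputable def Fzz {N : ℕ} (F : ℝ × (Fin N → ℝ) → ℝ) (z : ℝ) (p : Fin N → ℝ) : ℝ :=
  fderiv ℝ (fun q => fderiv ℝ F q (1, 0)) (z, p) (1, 0)

/-- `F_{z p_i}`. -/
noncomputable def Fzp {N : ℕ} (F : ℝ × (Fin N → ℝ) → ℝ) (i : Fin N) (z : ℝ) (p : Fin N → ℝ) :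
    ℝ :=
  fderiv ℝ (fun q => fderiv ℝ F q ((0 : ℝ), Pi.single i 1)) (z, p) (1, 0)

/-- `F_{p_i p_j}`. -/
noncomputable def Fpp {N : ℕ} (F : ℝ × (Fin N → ℝ) → ℝ) (i j : Fin N) (z : ℝ)
    (p : Fin N → ℝ) : ℝ :=
  fderiv ℝ (fun q => fderiv ℝ F q ((0 : ℝ), Pi.single j 1)) (z, p) ((0 : ℝ), Pi.single i 1)

/-- `𝔄₁(t) = A(u ∘ Φ_t⁻¹) = ∫_Ω F(u_t, ∇u_t)`, the inner deformation of the functional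
`A(w) := ∫_Ω F(w, ∇w)`. -/
noncomputable def innerA {N : ℕ} (Ω : Set (Fin N → ℝ)) (F : ℝ × (Fin N → ℝ) → ℝ)
    (u : (Fin N → ℝ) → ℝ) (Φ : ℝ → (Fin N → ℝ) → (Fin N → ℝ)) (t : ℝ) : ℝ :=
  ∫ y in Ω, F (u (Function.invFun (Φ t) y),
      grad (fun z => u (Function.invFun (Φ t) z)) y)

/-- `t ↦ A(u + tφ) = ∫_Ω F(u + tφ, ∇u + t∇φ)`, the outer deformation of the functional
`A(w) := ∫_Ω F(w, ∇w)`. -/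
noncomputable def gateauxA {N : ℕ} (Ω : Set (Fin N → ℝ)) (F : ℝ × (Fin N → ℝ) → ℝ)
    (u φ : (Fin N → ℝ) → ℝ) (t : ℝ) : ℝ :=
  ∫ x in Ω, F (u x + t * φ x, fun i => pdv u i x + t * pdv φ i x)

/-- The matrix `M_t(x)` with entries `δ_{ij} + t ∂η^i/∂x_j + (t²/2) ∂W^i/∂x_j`. -/
noncomputable def defMat {N : ℕ} (η W : (Fin N → ℝ) → (Fin N → ℝ)) (t : ℝ)
    (x : Fin N → ℝ) : Matrix (Fin N) (Fin N) ℝ :=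
  Matrix.of fun i j =>
    (if i = j then (1 : ℝ) else 0) + t * pdv (fun z => η z i) j x
      + (t ^ 2 / 2) * pdv (fun z => W z i) j x

/-- `Φ(a) := ∫_0^a |s² − 1| ds`. -/
noncomputable def PhiAC (a : ℝ) : ℝ := ∫ s in (0 : ℝ)..a, |s ^ 2 - 1|

/-- All partial derivatives (= iterated Fréchet derivatives) of `f` up to order `n` are
bounded; the case `i = 0` says `f` itself is bounded. -/
def BddUpTo {N : ℕ} {E : Type*} [NormedAddCommGroup E] [NormedSpace ℝ E]
    (n : ℕ) (f : (Fin N → ℝ) → E) : Prop :=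
  ∀ i : ℕ, i ≤ n → ∃ C : ℝ, ∀ x, ‖iteratedFDeriv ℝ i f x‖ ≤ C



/-!
The function `u_t` is constant along the trajectories `t ↦ Φ_t x`. Differentiating the identity
`u_t(Φ_t x) = u x` once and twice at `t = 0` gives `∂_t u_t = -∇u·η` and `∂_t² u_t = X₀`. Time
derivatives commute with the spatial jet `(u_t, ∇u_t)`, so the chain rule expresses
`∂_t² F(u_t, ∇u_t)` at `t = 0` as the second variation of the integrand in the direction `∇u·η`
plus its first variation in the direction `X₀`, and the closure of `Ω` is compact, which allows
differentiating under the integral sign.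
-/

section TimeDerivative

variable {E V W : Type*} [NormedAddCommGroup E] [NormedSpace ℝ E]
  [NormedAddCommGroup V] [NormedSpace ℝ V] [NormedAddCommGroup W] [NormedSpace ℝ W]

lemma fderiv_fderiv_apply {f : E → V} {x : E} (hf : ContDiffAt ℝ 2 f x) (v w : E) :
    fderiv ℝ (fun y => fderiv ℝ f y v) x w = fderiv ℝ (fderiv ℝ f) x w v := by
  have hdiff : DifferentiableAt ℝ (fderiv ℝ f) x :=
    (hf.fderiv_right (m := 1) (by norm_num)).differentiableAt one_ne_zero
  rw [fderiv_clm_apply hdiff (differentiableAt_const v)]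
  simp

lemma fderiv_fderiv_comm {f : E → V} {x : E} (hf : ContDiffAt ℝ 2 f x) (v w : E) :
    fderiv ℝ (fderiv ℝ f) x v w = fderiv ℝ (fderiv ℝ f) x w v :=
  (hf.isSymmSndFDerivAt (by simp)) v w

lemma hasDerivAt_deriv_comp {f : E → V} {c c' : ℝ → E} {c'' : E} {t : ℝ}
    (hf : ContDiffAt ℝ 2 f (c t)) (hc : ∀ᶠ s in 𝓝 t, HasDerivAt c (c' s) s)
    (hc' : HasDerivAt c' c'' t) :
    HasDerivAt (deriv (f ∘ c))
      (fderiv ℝ (fderiv ℝ f) (c t) (c' t) (c' t) + fderiv ℝ f (c t) c'') t := by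
  have hct : HasDerivAt c (c' t) t := hc.self_of_nhds
  have hfd : DifferentiableAt ℝ (fderiv ℝ f) (c t) :=
    (hf.fderiv_right (m := 1) (by norm_num)).differentiableAt one_ne_zero
  have hchain : deriv (f ∘ c) =ᶠ[𝓝 t] fun s => fderiv ℝ f (c s) (c' s) := by
    filter_upwards [hc, hct.continuousAt.eventually (hf.eventually (by simp))] with s hcs hfs
    exact ((hfs.differentiableAt two_ne_zero).hasFDerivAt.comp_hasDerivAt s hcs).deriv
  exact ((hfd.hasFDerivAt.comp_hasDerivAt t hct).clm_apply hc').congr_of_eventuallyEq hchain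

/-- The partial derivative `∂f/∂t` of a function `f(t, y)` of time and space, again as a function
of `(t, y)`. -/
noncomputable def timeDeriv (f : ℝ × E → V) (q : ℝ × E) : V :=
  fderiv ℝ f q (1, 0)

lemma contDiffAt_timeDeriv {m n : WithTop ℕ∞} {f : ℝ × E → V} {q : ℝ × E}
    (hf : ContDiffAt ℝ n f q) (hmn : m + 1 ≤ n) : ContDiffAt ℝ m (timeDeriv f) q :=
  (hf.fderiv_right hmn).clm_apply contDiffAt_const

lemma hasDerivAt_timeDeriv {f : ℝ × E → V} {t : ℝ} {y : E} (hf : DifferentiableAt ℝ f (t, y)) :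
    HasDerivAt (fun s => f (s, y)) (timeDeriv f (t, y)) t :=
  hf.hasFDerivAt.comp_hasDerivAt t ((hasDerivAt_id t).prodMk (hasDerivAt_const t y))

lemma eventually_hasDerivAt_timeDeriv {f : ℝ × E → V} {t : ℝ} {y : E}
    (hf : ContDiffAt ℝ 1 f (t, y)) :
    ∀ᶠ s in 𝓝 t, HasDerivAt (fun r => f (r, y)) (timeDeriv f (s, y)) s := by
  have hslice : ContinuousAt (fun s : ℝ => (s, y)) t := by fun_prop
  filter_upwards [hslice.eventually (hf.eventually (by simp))] with s hs
  exact hasDerivAt_timeDeriv (hs.differentiableAt one_ne_zero)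

lemma eventually_forall_contDiffAt {n : WithTop ℕ∞} (hn : n ≠ (⊤ : ℕ∞)) {f : ℝ × E → V} {t : ℝ}
    {K : Set E} (hK : IsCompact K) (hf : ∀ y ∈ K, ContDiffAt ℝ n f (t, y)) :
    ∀ᶠ s in 𝓝 t, ∀ y ∈ K, ContDiffAt ℝ n f (s, y) :=
  hK.eventually_forall_of_forall_eventually fun y hy => (hf y hy).eventually hn

lemma contDiffAt_slice {n : WithTop ℕ∞} {f : ℝ × E → V} {t : ℝ} {y : E}
    (hf : ContDiffAt ℝ n f (t, y)) : ContDiffAt ℝ n (fun z => f (t, z)) y :=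
  hf.comp y (contDiffAt_const.prodMk contDiffAt_id)

lemma fderiv_slice {f : ℝ × E → V} {t : ℝ} {y : E} (hf : DifferentiableAt ℝ f (t, y)) (v : E) :
    fderiv ℝ (fun z => f (t, z)) y v = fderiv ℝ f (t, y) (0, v) := by
  have hcomp : HasFDerivAt (fun z => f (t, z))
      (fderiv ℝ f (t, y) ∘L ContinuousLinearMap.inr ℝ ℝ E) y :=
    hf.hasFDerivAt.comp y (hasFDerivAt_prodMk_right t y)
  rw [hcomp.fderiv]
  simp

lemma fderiv_fderiv_slice {f : ℝ × E → V} {t : ℝ} {y : E} (hf : ContDiffAt ℝ 2 f (t, y))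
    (v w : E) :
    fderiv ℝ (fderiv ℝ fun z => f (t, z)) y v w
      = fderiv ℝ (fderiv ℝ f) (t, y) (0, v) (0, w) := by
  have hslice : ContinuousAt (fun z : E => (t, z)) y := by fun_prop
  have hnear : (fun z => fderiv ℝ (fun z' => f (t, z')) z w)
      =ᶠ[𝓝 y] fun z => fderiv ℝ f (t, z) (0, w) := by
    filter_upwards [hslice.eventually (hf.eventually (by simp))] with z hz
    exact fderiv_slice (hz.differentiableAt two_ne_zero) w
  have hdiff : DifferentiableAt ℝ (fun q => fderiv ℝ f q (0, w)) (t, y) :=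
    ((hf.fderiv_right (m := 1) (by norm_num)).clm_apply contDiffAt_const).differentiableAt
      one_ne_zero
  rw [← fderiv_fderiv_apply (contDiffAt_slice hf), hnear.fderiv_eq, fderiv_slice hdiff,
    fderiv_fderiv_apply hf]

lemma timeDeriv_timeDeriv {f : ℝ × E → V} {q : ℝ × E} (hf : ContDiffAt ℝ 2 f q) :
    timeDeriv (timeDeriv f) q = fderiv ℝ (fderiv ℝ f) q (1, 0) (1, 0) :=
  fderiv_fderiv_apply hf _ _

lemma timeDeriv_timeDeriv_comp {f : W → V} {h : ℝ × E → W} {t : ℝ} {y : E}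
    (hf : ContDiffAt ℝ 2 f (h (t, y))) (hh : ContDiffAt ℝ 2 h (t, y)) :
    timeDeriv (timeDeriv (f ∘ h)) (t, y)
      = fderiv ℝ (fderiv ℝ f) (h (t, y)) (timeDeriv h (t, y)) (timeDeriv h (t, y))
        + fderiv ℝ f (h (t, y)) (timeDeriv (timeDeriv h) (t, y)) := by
  have hfh : ContDiffAt ℝ 2 (f ∘ h) (t, y) := hf.comp (t, y) hh
  have hcurve := hasDerivAt_deriv_comp (c := fun s => h (s, y)) hf
    (eventually_hasDerivAt_timeDeriv (hh.of_le one_le_two))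
    (hasDerivAt_timeDeriv ((contDiffAt_timeDeriv (m := 1) hh (by norm_num)).differentiableAt
      one_ne_zero))
  have hsame : (fun s => timeDeriv (f ∘ h) (s, y)) =ᶠ[𝓝 t] deriv (f ∘ fun s => h (s, y)) :=
    (eventually_hasDerivAt_timeDeriv (hfh.of_le one_le_two)).mono fun s hs => hs.deriv.symm
  exact (hasDerivAt_timeDeriv ((contDiffAt_timeDeriv (m := 1) hfh (by norm_num)).differentiableAt
    one_ne_zero)).unique (hcurve.congr_of_eventuallyEq hsame)

end TimeDerivative

section DifferentiationUnderTheIntegral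

variable {E V : Type*} [NormedAddCommGroup E] [NormedSpace ℝ E] [MeasurableSpace E]
  [OpensMeasurableSpace E] [NormedAddCommGroup V] [NormedSpace ℝ V]
  {μ : Measure E} [IsFiniteMeasureOnCompacts μ] {G : ℝ × E → V} {s K : Set E} {t : ℝ}

lemma hasDerivAt_setIntegral (hK : IsCompact K) (hs : s ⊆ K)
    (hG : ∀ y ∈ K, ContDiffAt ℝ 1 G (t, y)) :
    HasDerivAt (fun r => ∫ y in s, G (r, y) ∂μ) (∫ y in s, timeDeriv G (t, y) ∂μ) t := by
  obtain ⟨δ, hδ, hball⟩ := Metric.nhds_basis_closedBall.mem_iff.1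
    (eventually_forall_contDiffAt (by simp) hK hG)
  have hG' : ∀ r ∈ Metric.closedBall t δ, ∀ y ∈ K, ContinuousAt (timeDeriv G) (r, y) :=
    fun r hr y hy => (contDiffAt_timeDeriv (m := 0) (hball hr y hy) (by simp)).continuousAt
  obtain ⟨C, hC⟩ := ((isCompact_closedBall t δ).prod hK).exists_bound_of_continuousOn
    (f := timeDeriv G) fun q hq => (hG' q.1 hq.1 q.2 hq.2).continuousWithinAt
  have hslice : ∀ {f : ℝ × E → V} {r : ℝ}, (∀ y ∈ K, ContinuousAt f (r, y)) →
      ContinuousOn (fun y => f (r, y)) K := fun {f r} hf y hy =>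
    (ContinuousAt.comp (f := fun z => (r, z)) (hf y hy) (by fun_prop)).continuousWithinAt
  have hGr : ∀ r ∈ Metric.closedBall t δ, ContinuousOn (fun y => G (r, y)) K := fun r hr =>
    hslice fun y hy => (hball hr y hy).continuousAt
  have ht : t ∈ Metric.closedBall t δ := Metric.mem_closedBall_self hδ.le
  have hmeas : ∀ {f : E → V}, ContinuousOn f K → AEStronglyMeasurable f (μ.restrict s) :=
    fun hf => (hf.aestronglyMeasurable_of_isCompact hK hK.measurableSet).mono_set hs
  have hae : ∀ᵐ y ∂μ.restrict s, y ∈ K :=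
    ae_restrict_of_ae_restrict_of_subset hs (ae_restrict_mem hK.measurableSet)
  refine (hasDerivAt_integral_of_dominated_loc_of_deriv_le
    (F' := fun r y => timeDeriv G (r, y)) (bound := fun _ => C)
    (Metric.closedBall_mem_nhds t hδ) ?_ ?_ (hmeas (hslice (hG' t ht))) ?_ ?_ ?_).2
  · filter_upwards [Metric.closedBall_mem_nhds t hδ] with r hr using hmeas (hGr r hr)
  · exact ((hGr t ht).integrableOn_compact hK).mono_set hs
  · filter_upwards [hae] with y hy r hr using hC (r, y) ⟨hr, hy⟩
  · exact (continuousOn_const.integrableOn_compact hK).mono_set hs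
  · filter_upwards [hae] with y hy r hr using
      hasDerivAt_timeDeriv ((hball hr y hy).differentiableAt one_ne_zero)

lemma eventually_hasDerivAt_setIntegral (hK : IsCompact K) (hs : s ⊆ K)
    (hG : ∀ y ∈ K, ContDiffAt ℝ 1 G (t, y)) :
    ∀ᶠ r in 𝓝 t,
      HasDerivAt (fun r' => ∫ y in s, G (r', y) ∂μ) (∫ y in s, timeDeriv G (r, y) ∂μ) r :=
  (eventually_forall_contDiffAt (by simp) hK hG).mono fun _ hr => hasDerivAt_setIntegral hK hs hr

end DifferentiationUnderTheIntegral

section InnerDeformation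

/-- The function `u_t(y) = u(Φ_t⁻¹(y))` of time and space. The inverse is `Function.invFun`, so the
value is arbitrary at points `y` outside the range of `Φ t`. -/
noncomputable def innerDeformation {E V : Type*} [Nonempty E] (Φ : ℝ → E → E) (u : E → V)
    (q : ℝ × E) : V :=
  u (Function.invFun (Φ q.1) q.2)

lemma innerDeformation_apply {E V : Type*} [Nonempty E] {Φ : ℝ → E → E} {t : ℝ}
    (hinj : Function.Injective (Φ t)) (u : E → V) (x : E) : innerDeformation Φ u (t, Φ t x) = u x :=
  congrArg u (Function.leftInverse_invFun hinj x)

variable {E V : Type*} [NormedAddCommGroup E] [NormedSpace ℝ E]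
  [NormedAddCommGroup V] [NormedSpace ℝ V]

/-- `Φ` is a deformation of the identity with initial velocity `η` and initial acceleration `ζ`,
of class `C³` near time `0`. -/
structure IsDeformation (Φ : ℝ → E → E) (η ζ : E → E) : Prop where
  contDiffAt : ∀ x, ContDiffAt ℝ 3 (Function.uncurry Φ) (0, x)
  zero : ∀ x, Φ 0 x = x
  velocity : ∀ x, deriv (fun t => Φ t x) 0 = η x
  acceleration : ∀ x, deriv (deriv fun t => Φ t x) 0 = ζ x

-- The derivative of `(t, x) ↦ (t, Φ_t x)` at time `0` is the shear `(s, v) ↦ (s, v + s η(x))`,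
-- which is invertible, so the inverse function theorem applies at every point.
lemma contDiffAt_invFun [CompleteSpace E] {Φ : ℝ → E → E} {n : WithTop ℕ∞} (hn : n ≠ 0) {x : E}
    (hΦ : ContDiffAt ℝ n (Function.uncurry Φ) (0, x)) (hzero : ∀ x, Φ 0 x = x)
    (hinj : ∀ᶠ t in 𝓝 0, Function.Injective (Φ t)) :
    ContDiffAt ℝ n (fun q : ℝ × E => Function.invFun (Φ q.1) q.2) (0, x) := by
  set P : ℝ × E → ℝ × E := fun q => (q.1, Function.uncurry Φ q)
  have hPx : P (0, x) = (0, x) := Prod.ext rfl (hzero x)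
  have hPn : ContDiffAt ℝ n P (0, x) := contDiffAt_fst.prodMk hΦ
  have hΦd : DifferentiableAt ℝ (Function.uncurry Φ) (0, x) := hΦ.differentiableAt hn
  let shear : (ℝ × E) ≃L[ℝ] (ℝ × E) :=
    (ContinuousLinearEquiv.refl ℝ ℝ).skewProd (ContinuousLinearEquiv.refl ℝ E)
      (ContinuousLinearMap.toSpanSingleton ℝ (timeDeriv (Function.uncurry Φ) (0, x)))
  have hspace : ∀ v, fderiv ℝ (Function.uncurry Φ) (0, x) (0, v) = v := fun v => by
    rw [← fderiv_slice hΦd]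
    simp [Function.uncurry, hzero]
  have hPd : HasFDerivAt P (shear : (ℝ × E) →L[ℝ] (ℝ × E)) (0, x) := by
    convert! hasFDerivAt_fst.prodMk hΦd.hasFDerivAt using 1
    ext v <;> simp [shear, timeDeriv, hspace]
  have hleft : ∀ᶠ q in 𝓝 (0, x), (fun q : ℝ × E => (q.1, Function.invFun (Φ q.1) q.2)) (P q) = q :=
    (continuousAt_fst.eventually hinj).mono fun q hq =>
      Prod.ext rfl (Function.leftInverse_invFun hq q.2)
  have hlocal := (hPn.to_localInverse hPd hn).congr_of_eventuallyEq
    ((hPn.hasStrictFDerivAt' hPd hn).localInverse_unique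
      (g := fun q => (q.1, Function.invFun (Φ q.1) q.2)) hleft)
  rw [hPx] at hlocal
  exact hlocal.snd

variable {Φ : ℝ → E → E} {η ζ : E → E} {u : E → V}

lemma innerDeformation_zero {X : Type*} (hΦ : IsDeformation Φ η ζ) (u : E → X) (y : E) :
    innerDeformation Φ u (0, y) = u y := by
  have hinj : Function.Injective (Φ 0) := fun x₁ x₂ h => by rwa [hΦ.zero, hΦ.zero] at h
  simpa only [hΦ.zero] using innerDeformation_apply hinj u y

lemma IsDeformation.contDiff_velocity (hΦ : IsDeformation Φ η ζ) : ContDiff ℝ 2 η := by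
  have hη : η = fun x => timeDeriv (Function.uncurry Φ) (0, x) := funext fun x => by
    rw [← hΦ.velocity]
    exact (hasDerivAt_timeDeriv ((hΦ.contDiffAt x).differentiableAt three_ne_zero)).deriv
  rw [hη, contDiff_iff_contDiffAt]
  exact fun x => contDiffAt_slice (contDiffAt_timeDeriv (hΦ.contDiffAt x) (by norm_num))

lemma IsDeformation.eventually_hasDerivAt (hΦ : IsDeformation Φ η ζ) (x : E) :
    ∀ᶠ t in 𝓝 0, HasDerivAt (fun s => (s, Φ s x)) (1, deriv (fun s => Φ s x) t) t := by
  filter_upwards [eventually_hasDerivAt_timeDeriv ((hΦ.contDiffAt x).of_le (by norm_num))]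
    with t ht
  exact (hasDerivAt_id t).prodMk ht.differentiableAt.hasDerivAt

lemma IsDeformation.hasDerivAt_deriv (hΦ : IsDeformation Φ η ζ) (x : E) :
    HasDerivAt (fun t => ((1 : ℝ), deriv (fun s => Φ s x) t)) (0, ζ x) 0 := by
  have hcurve : ContDiffAt ℝ 2 (fun t => Φ t x) 0 :=
    ((hΦ.contDiffAt x).comp (0 : ℝ) (contDiffAt_id.prodMk contDiffAt_const)).of_le (by norm_num)
  have hderiv : DifferentiableAt ℝ (deriv fun t => Φ t x) 0 :=
    ((hcurve.fderiv_right (m := 1) (by norm_num)).clm_apply contDiffAt_const).differentiableAt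
      one_ne_zero
  rw [← hΦ.acceleration]
  exact (hasDerivAt_const _ _).prodMk hderiv.hasDerivAt

section

variable [CompleteSpace E] (hΦ : IsDeformation Φ η ζ)
  (hinj : ∀ᶠ t in 𝓝 0, Function.Injective (Φ t))

include hΦ hinj

lemma contDiffAt_innerDeformation {n : WithTop ℕ∞} (hn : n ≤ 3) (hu : ContDiff ℝ n u) (y : E) :
    ContDiffAt ℝ n (innerDeformation Φ u) (0, y) :=
  hu.contDiffAt.comp _
    ((contDiffAt_invFun three_ne_zero (hΦ.contDiffAt y) hΦ.zero hinj).of_le hn)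

lemma timeDeriv_innerDeformation (hu : ContDiff ℝ 1 u) (x : E) :
    timeDeriv (innerDeformation Φ u) (0, x) = -fderiv ℝ u x (η x) := by
  set g := innerDeformation Φ u
  have hg : DifferentiableAt ℝ g (0, x) :=
    (contDiffAt_innerDeformation hΦ hinj (by norm_num) hu x).differentiableAt one_ne_zero
  have hconst : (g ∘ fun t => (t, Φ t x)) =ᶠ[𝓝 0] fun _ => u x :=
    hinj.mono fun t ht => innerDeformation_apply ht u x
  have htransport : fderiv ℝ g (0, x) (1, η x) = 0 := by
    have hg' : HasFDerivAt g (fderiv ℝ g (0, x)) (0, Φ 0 x) := by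
      simpa only [hΦ.zero] using hg.hasFDerivAt
    rw [← hΦ.velocity]
    exact (hg'.comp_hasDerivAt (0 : ℝ) (hΦ.eventually_hasDerivAt x).self_of_nhds).unique
      ((hasDerivAt_const (0 : ℝ) (u x)).congr_of_eventuallyEq hconst)
  have hspace : fderiv ℝ g (0, x) (0, η x) = fderiv ℝ u x (η x) := by
    rw [← fderiv_slice hg]
    simp only [g, innerDeformation_zero hΦ]
  rw [eq_neg_iff_add_eq_zero, ← hspace, ← htransport, timeDeriv, ← map_add]
  simp

lemma fderiv_fderiv_innerDeformation_add_eq_zero (hu : ContDiff ℝ 2 u) (x : E) :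
    fderiv ℝ (fderiv ℝ (innerDeformation Φ u)) (0, x) (1, η x) (1, η x)
      + fderiv ℝ u x (ζ x) = 0 := by
  set g := innerDeformation Φ u
  have hg : ContDiffAt ℝ 2 g (0, x) := contDiffAt_innerDeformation hΦ hinj (by norm_num) hu x
  have hg' : ContDiffAt ℝ 2 g (0, Φ 0 x) := by simpa only [hΦ.zero] using hg
  have hconst : (g ∘ fun t => (t, Φ t x)) =ᶠ[𝓝 0] fun _ => u x :=
    hinj.mono fun t ht => innerDeformation_apply ht u x
  have hderiv : deriv (g ∘ fun t => (t, Φ t x)) =ᶠ[𝓝 0] fun _ => 0 := by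
    simpa only [deriv_const'] using hconst.deriv
  have hzero := (hasDerivAt_deriv_comp (c := fun t => (t, Φ t x)) hg'
    (hΦ.eventually_hasDerivAt x) (hΦ.hasDerivAt_deriv x)).unique
    ((hasDerivAt_const (0 : ℝ) (0 : V)).congr_of_eventuallyEq hderiv)
  rw [hΦ.zero, hΦ.velocity, ← fderiv_slice (hg.differentiableAt two_ne_zero)] at hzero
  simpa only [g, innerDeformation_zero hΦ] using hzero

lemma fderiv_fderiv_innerDeformation_mixed (hu : ContDiff ℝ 2 u) (x v : E) :
    fderiv ℝ (fderiv ℝ (innerDeformation Φ u)) (0, x) (0, v) (1, 0)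
      = -(fderiv ℝ (fderiv ℝ u) x v (η x) + fderiv ℝ u x (fderiv ℝ η x v)) := by
  set g := innerDeformation Φ u
  have hg : ContDiffAt ℝ 2 g (0, x) := contDiffAt_innerDeformation hΦ hinj (by norm_num) hu x
  have hg' : DifferentiableAt ℝ (timeDeriv g) (0, x) :=
    (contDiffAt_timeDeriv (m := 1) hg (by norm_num)).differentiableAt one_ne_zero
  have hu' : DifferentiableAt ℝ (fderiv ℝ u) x :=
    (hu.fderiv_right (m := 1) (by norm_num)).differentiable one_ne_zero x
  have hη : DifferentiableAt ℝ η x := hΦ.contDiff_velocity.differentiable two_ne_zero x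
  calc fderiv ℝ (fderiv ℝ g) (0, x) (0, v) (1, 0)
      = fderiv ℝ (timeDeriv g) (0, x) (0, v) := (fderiv_fderiv_apply hg _ _).symm
    _ = fderiv ℝ (fun z => timeDeriv g (0, z)) x v := (fderiv_slice hg' v).symm
    _ = fderiv ℝ (fun z => -fderiv ℝ u z (η z)) x v := by
      simp only [g, timeDeriv_innerDeformation hΦ hinj (hu.of_le one_le_two)]
    _ = -(fderiv ℝ (fderiv ℝ u) x v (η x) + fderiv ℝ u x (fderiv ℝ η x v)) := by
      rw [fderiv_fun_neg, fderiv_clm_apply hu' hη]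
      simp [add_comm]

lemma timeDeriv_timeDeriv_innerDeformation (hu : ContDiff ℝ 2 u) (x : E) :
    timeDeriv (timeDeriv (innerDeformation Φ u)) (0, x)
      = fderiv ℝ (fderiv ℝ u) x (η x) (η x)
        + fderiv ℝ u x ((2 : ℝ) • fderiv ℝ η x (η x) - ζ x) := by
  set g := innerDeformation Φ u
  have hg : ContDiffAt ℝ 2 g (0, x) := contDiffAt_innerDeformation hΦ hinj (by norm_num) hu x
  have hspace : fderiv ℝ (fderiv ℝ g) (0, x) (0, η x) (0, η x)
      = fderiv ℝ (fderiv ℝ u) x (η x) (η x) := by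
    rw [← fderiv_fderiv_slice hg]
    simp only [g, innerDeformation_zero hΦ]
  have hmixed := fderiv_fderiv_innerDeformation_mixed hΦ hinj hu x (η x)
  have hzero := fderiv_fderiv_innerDeformation_add_eq_zero hΦ hinj hu x
  have hsplit : ((1 : ℝ), η x) = (1, 0) + (0, η x) := by simp
  rw [hsplit] at hzero
  simp only [map_add, _root_.add_apply] at hzero
  rw [fderiv_fderiv_comm hg (1, 0) (0, η x), hmixed, hspace] at hzero
  rw [timeDeriv_timeDeriv hg, map_sub, map_smul, ← sub_eq_zero, ← hzero]
  module

end

end InnerDeformation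

section Coordinates

variable {N : ℕ}

lemma continuousLinearMap_apply_eq_sum_single {ι V : Type*} [Fintype ι] [DecidableEq ι]
    [NormedAddCommGroup V] [NormedSpace ℝ V] (L : (ι → ℝ) →L[ℝ] V) (v : ι → ℝ) :
    L v = ∑ i, v i • L (Pi.single i 1) := by
  conv_lhs => rw [pi_eq_sum_univ' v, map_sum]
  exact Finset.sum_congr rfl fun i _ => map_smul L _ _

lemma continuousLinearMap_prod_apply_eq_sum_single {ι V : Type*} [Fintype ι] [DecidableEq ι]
    [NormedAddCommGroup V] [NormedSpace ℝ V] (L : ℝ × (ι → ℝ) →L[ℝ] V) (a : ℝ) (w : ι → ℝ) :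
    L (a, w) = a • L (1, 0) + ∑ i, w i • L (0, Pi.single i 1) := by
  have hsplit : ((a, w) : ℝ × (ι → ℝ)) = a • (1, 0) + (0, w) := by simp
  rw [hsplit, map_add, map_smul]
  exact congrArg _ (continuousLinearMap_apply_eq_sum_single
    (L ∘L ContinuousLinearMap.inr ℝ ℝ (ι → ℝ)) w)

lemma bilinear_prod_apply_self_eq_sum_single {ι : Type*} [Fintype ι] [DecidableEq ι]
    {B : ℝ × (ι → ℝ) →L[ℝ] ℝ × (ι → ℝ) →L[ℝ] ℝ}
    (hB : ∀ i, B (0, Pi.single i 1) (1, 0) = B (1, 0) (0, Pi.single i 1)) (a : ℝ) (w : ι → ℝ) :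
    B (a, w) (a, w) = B (1, 0) (1, 0) * a ^ 2
      + 2 * ∑ i, B (1, 0) (0, Pi.single i 1) * (a * w i)
      + ∑ i, ∑ j, B (0, Pi.single i 1) (0, Pi.single j 1) * w i * w j := by
  have hexpand : ∀ L : ℝ × (ι → ℝ) →L[ℝ] ℝ,
      L (a, w) = a * L (1, 0) + ∑ i, w i * L (0, Pi.single i 1) := fun L =>
    continuousLinearMap_prod_apply_eq_sum_single L a w
  calc B (a, w) (a, w)
      = a * B (1, 0) (a, w) + ∑ i, w i * B (0, Pi.single i 1) (a, w) := by
        simpa using congrArg (fun L => L (a, w))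
          (continuousLinearMap_prod_apply_eq_sum_single B a w)
    _ = a * (a * B (1, 0) (1, 0) + ∑ i, w i * B (1, 0) (0, Pi.single i 1))
        + ∑ i, w i * (a * B (1, 0) (0, Pi.single i 1)
          + ∑ j, w j * B (0, Pi.single i 1) (0, Pi.single j 1)) := by
        simp only [hexpand, hB]
    _ = B (1, 0) (1, 0) * a ^ 2 + 2 * ∑ i, B (1, 0) (0, Pi.single i 1) * (a * w i)
        + ∑ i, ∑ j, B (0, Pi.single i 1) (0, Pi.single j 1) * w i * w j := by
        simp only [mul_add, Finset.mul_sum, Finset.sum_add_distrib, two_mul, mul_comm,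
          mul_left_comm, mul_assoc]
        ring

lemma sum_pdv_mul (f : (Fin N → ℝ) → ℝ) (x v : Fin N → ℝ) :
    ∑ i, pdv f i x * v i = fderiv ℝ f x v := by
  rw [continuousLinearMap_apply_eq_sum_single]
  exact Finset.sum_congr rfl fun i _ => mul_comm _ _

lemma advf_eq_fderiv {η : (Fin N → ℝ) → (Fin N → ℝ)} {x : Fin N → ℝ}
    (hη : DifferentiableAt ℝ η x) : advf η x = fderiv ℝ η x (η x) := by
  ext i
  calc advf η x i = fderiv ℝ (fun z => η z i) x (η x) := by
        rw [← sum_pdv_mul]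
        exact Finset.sum_congr rfl fun j _ => mul_comm _ _
    _ = fderiv ℝ η x (η x) i := by
        rw [fderiv_apply hη]
        rfl

lemma sum_pdv_pdv_mul {f : (Fin N → ℝ) → ℝ} {x : Fin N → ℝ} (hf : ContDiffAt ℝ 2 f x)
    (v w : Fin N → ℝ) :
    ∑ i, ∑ j, pdv (pdv f i) j x * v i * w j = fderiv ℝ (fderiv ℝ f) x w v := by
  rw [continuousLinearMap_apply_eq_sum_single _ v]
  refine Finset.sum_congr rfl fun i _ => ?_
  calc ∑ j, pdv (pdv f i) j x * v i * w j = v i * ∑ j, pdv (pdv f i) j x * w j := by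
        rw [Finset.mul_sum]
        exact Finset.sum_congr rfl fun j _ => by ring
    _ = v i • fderiv ℝ (fderiv ℝ f) x w (Pi.single i 1) := by
        rw [sum_pdv_mul, ← fderiv_fderiv_apply hf]
        rfl

lemma X0_eq_fderiv {u : (Fin N → ℝ) → ℝ} {η : (Fin N → ℝ) → (Fin N → ℝ)} {x : Fin N → ℝ}
    (hu : ContDiffAt ℝ 2 u x) (hη : DifferentiableAt ℝ η x) (ζ : (Fin N → ℝ) → (Fin N → ℝ)) :
    X0 u η ζ x = fderiv ℝ (fderiv ℝ u) x (η x) (η x)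
      + fderiv ℝ u x ((2 : ℝ) • fderiv ℝ η x (η x) - ζ x) := by
  rw [← sum_pdv_pdv_mul hu, ← sum_pdv_mul, ← advf_eq_fderiv hη]
  rfl

end Coordinates

section Jets

variable {N : ℕ}

/-- The first-order jet `(f, ∇f)`, the argument at which the integrand `F` is evaluated. -/
noncomputable def jet (f : (Fin N → ℝ) → ℝ) (y : Fin N → ℝ) : ℝ × (Fin N → ℝ) :=
  (f y, grad f y)

/-- The jet `(f(t, ·), ∇f(t, ·))` in the space variable of a function `f(t, y)` of time and
space. -/
noncomputable def spatialJet (f : ℝ × (Fin N → ℝ) → ℝ) (q : ℝ × (Fin N → ℝ)) :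
    ℝ × (Fin N → ℝ) :=
  jet (fun y => f (q.1, y)) q.2

lemma jet_neg (f : (Fin N → ℝ) → ℝ) (y : Fin N → ℝ) : jet (fun z => -f z) y = -jet f y := by
  ext <;> simp [jet, grad, pdv]

lemma continuous_jet {f : (Fin N → ℝ) → ℝ} (hf : ContDiff ℝ 1 f) : Continuous (jet f) :=
  hf.continuous.prodMk
    (continuous_pi fun _ => (hf.continuous_fderiv one_ne_zero).clm_apply continuous_const)

lemma spatialJet_eventuallyEq {f : ℝ × (Fin N → ℝ) → ℝ} {q : ℝ × (Fin N → ℝ)}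
    (hf : ContDiffAt ℝ 1 f q) :
    spatialJet f =ᶠ[𝓝 q] fun r => (f r, fun i => fderiv ℝ f r (0, Pi.single i 1)) := by
  filter_upwards [hf.eventually (by simp)] with r hr
  exact Prod.ext rfl (funext fun _ => fderiv_slice (hr.differentiableAt one_ne_zero) _)

lemma contDiffAt_spatialJet {m n : WithTop ℕ∞} {f : ℝ × (Fin N → ℝ) → ℝ} {q : ℝ × (Fin N → ℝ)}
    (hf : ContDiffAt ℝ n f q) (hmn : m + 1 ≤ n) : ContDiffAt ℝ m (spatialJet f) q := by
  have hjet : ContDiffAt ℝ m (fun r => (f r, fun i => fderiv ℝ f r (0, Pi.single i 1))) q :=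
    (hf.of_le (le_self_add.trans hmn)).prodMk
      (contDiffAt_pi.2 fun _ => (hf.fderiv_right hmn).clm_apply contDiffAt_const)
  exact hjet.congr_of_eventuallyEq (spatialJet_eventuallyEq (hf.of_le (le_add_self.trans hmn)))

lemma timeDeriv_spatialJet {f : ℝ × (Fin N → ℝ) → ℝ} {q : ℝ × (Fin N → ℝ)}
    (hf : ContDiffAt ℝ 2 f q) : timeDeriv (spatialJet f) q = spatialJet (timeDeriv f) q := by
  have hf' : ∀ i : Fin N, DifferentiableAt ℝ (fun r => fderiv ℝ f r (0, Pi.single i 1)) q :=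
    fun i => ((hf.fderiv_right (m := 1) (by norm_num)).clm_apply
      contDiffAt_const).differentiableAt one_ne_zero
  have hft : DifferentiableAt ℝ (timeDeriv f) q :=
    (contDiffAt_timeDeriv (m := 1) hf (by norm_num)).differentiableAt one_ne_zero
  have hjet := (hf.differentiableAt two_ne_zero).hasFDerivAt.prodMk
    (hasFDerivAt_pi.2 fun i => (hf' i).hasFDerivAt)
  rw [timeDeriv, (spatialJet_eventuallyEq (hf.of_le one_le_two)).fderiv_eq, hjet.fderiv]
  refine Prod.ext rfl (funext fun i => ?_)
  calc fderiv ℝ (fun r => fderiv ℝ f r (0, Pi.single i 1)) q (1, 0)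
      = fderiv ℝ (fun r => fderiv ℝ f r (1, 0)) q (0, Pi.single i 1) := by
        rw [fderiv_fderiv_apply hf, fderiv_fderiv_apply hf, fderiv_fderiv_comm hf]
    _ = pdv (fun z => timeDeriv f (q.1, z)) i q.2 := (fderiv_slice hft _).symm

lemma timeDeriv_timeDeriv_spatialJet {f : ℝ × (Fin N → ℝ) → ℝ} {q : ℝ × (Fin N → ℝ)}
    (hf : ContDiffAt ℝ 3 f q) :
    timeDeriv (timeDeriv (spatialJet f)) q = spatialJet (timeDeriv (timeDeriv f)) q := by
  have hcomm : timeDeriv (spatialJet f) =ᶠ[𝓝 q] spatialJet (timeDeriv f) :=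
    (hf.eventually (by simp)).mono fun r hr => timeDeriv_spatialJet (hr.of_le (by norm_num))
  rw [timeDeriv, hcomm.fderiv_eq]
  exact timeDeriv_spatialJet (contDiffAt_timeDeriv hf (by norm_num))

end Jets

section Variations

variable {N : ℕ} {F : ℝ × (Fin N → ℝ) → ℝ} {u φ : (Fin N → ℝ) → ℝ}

/-- The integrand of the first outer variation `δA(u, φ)` of `A(w) = ∫ F(w, ∇w)`. -/
noncomputable def firstVariationDensity (F : ℝ × (Fin N → ℝ) → ℝ) (u φ : (Fin N → ℝ) → ℝ)
    (x : Fin N → ℝ) : ℝ :=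
  Fz F (u x) (grad u x) * φ x + ∑ i, Fp F i (u x) (grad u x) * pdv φ i x

/-- The integrand of the second outer variation `δ²A(u, φ)` of `A(w) = ∫ F(w, ∇w)`. -/
noncomputable def secondVariationDensity (F : ℝ × (Fin N → ℝ) → ℝ) (u φ : (Fin N → ℝ) → ℝ)
    (x : Fin N → ℝ) : ℝ :=
  Fzz F (u x) (grad u x) * φ x ^ 2
    + 2 * ∑ i, Fzp F i (u x) (grad u x) * (φ x * pdv φ i x)
    + ∑ i, ∑ j, Fpp F i j (u x) (grad u x) * pdv φ i x * pdv φ j x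

lemma firstVariationDensity_eq_fderiv (x : Fin N → ℝ) :
    firstVariationDensity F u φ x = fderiv ℝ F (jet u x) (jet φ x) := by
  rw [jet, jet, continuousLinearMap_prod_apply_eq_sum_single]
  simp only [smul_eq_mul, mul_comm (φ x), mul_comm (grad φ x _)]
  rfl

lemma secondVariationDensity_eq_fderiv (hF : ContDiff ℝ 2 F) (x : Fin N → ℝ) :
    secondVariationDensity F u φ x
      = fderiv ℝ (fderiv ℝ F) (jet u x) (jet φ x) (jet φ x) := by
  have hF' : ContDiffAt ℝ 2 F (jet u x) := hF.contDiffAt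
  have hsecond : ∀ v w, fderiv ℝ (fun q => fderiv ℝ F q v) (u x, grad u x) w
      = fderiv ℝ (fderiv ℝ F) (jet u x) w v := fderiv_fderiv_apply hF'
  simp only [secondVariationDensity, Fzz, Fzp, Fpp, hsecond]
  exact (bilinear_prod_apply_self_eq_sum_single (fun i => fderiv_fderiv_comm hF' _ _)
    (φ x) (grad φ x)).symm

lemma continuous_firstVariationDensity (hF : ContDiff ℝ 1 F) (hu : ContDiff ℝ 1 u)
    (hφ : ContDiff ℝ 1 φ) : Continuous (firstVariationDensity F u φ) := by
  simp only [funext firstVariationDensity_eq_fderiv]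
  exact ((hF.continuous_fderiv one_ne_zero).comp (continuous_jet hu)).clm_apply (continuous_jet hφ)

lemma continuous_secondVariationDensity (hF : ContDiff ℝ 2 F) (hu : ContDiff ℝ 1 u)
    (hφ : ContDiff ℝ 1 φ) : Continuous (secondVariationDensity F u φ) := by
  have hD2F : Continuous (fderiv ℝ (fderiv ℝ F)) :=
    (hF.fderiv_right (m := 1) (by norm_num)).continuous_fderiv one_ne_zero
  simp only [funext (secondVariationDensity_eq_fderiv hF)]
  exact ((hD2F.comp (continuous_jet hu)).clm_apply (continuous_jet hφ)).clm_apply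
    (continuous_jet hφ)

end Variations

section SecondInnerVariation

variable {N : ℕ} {F : ℝ × (Fin N → ℝ) → ℝ} {u : (Fin N → ℝ) → ℝ}
  {Φ : ℝ → (Fin N → ℝ) → (Fin N → ℝ)} {η ζ : (Fin N → ℝ) → (Fin N → ℝ)}

lemma innerA_eq_setIntegral (Ω : Set (Fin N → ℝ)) (F : ℝ × (Fin N → ℝ) → ℝ)
    (u : (Fin N → ℝ) → ℝ) (Φ : ℝ → (Fin N → ℝ) → (Fin N → ℝ)) :
    innerA Ω F u Φ = fun t => ∫ y in Ω, (F ∘ spatialJet (innerDeformation Φ u)) (t, y) :=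
  rfl

variable (hΦ : IsDeformation Φ η ζ) (hinj : ∀ᶠ t in 𝓝 0, Function.Injective (Φ t))

include hΦ

lemma spatialJet_innerDeformation_zero (u : (Fin N → ℝ) → ℝ) (x : Fin N → ℝ) :
    spatialJet (innerDeformation Φ u) (0, x) = jet u x := by
  simp only [spatialJet, innerDeformation_zero hΦ]

include hinj

lemma timeDeriv_innerDeformation_eq_neg_sum (hu : ContDiff ℝ 1 u) (x : Fin N → ℝ) :
    timeDeriv (innerDeformation Φ u) (0, x) = -∑ i, pdv u i x * η x i := by
  rw [timeDeriv_innerDeformation hΦ hinj hu, sum_pdv_mul]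

lemma timeDeriv_timeDeriv_innerDeformation_eq_X0 (hu : ContDiff ℝ 2 u) (x : Fin N → ℝ) :
    timeDeriv (timeDeriv (innerDeformation Φ u)) (0, x) = X0 u η ζ x := by
  rw [timeDeriv_timeDeriv_innerDeformation hΦ hinj hu,
    X0_eq_fderiv hu.contDiffAt
      (hΦ.contDiff_velocity.differentiable two_ne_zero x)]

lemma contDiff_X0 (hu : ContDiff ℝ 3 u) : ContDiff ℝ 1 (X0 u η ζ) := by
  simp only [contDiff_iff_contDiffAt,
    ← funext (timeDeriv_timeDeriv_innerDeformation_eq_X0 hΦ hinj (hu.of_le (by norm_num)))]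
  intro x
  exact contDiffAt_slice (contDiffAt_timeDeriv (m := 1) (n := 2) (contDiffAt_timeDeriv
    (contDiffAt_innerDeformation hΦ hinj le_rfl hu x) (by norm_num)) (by norm_num))

lemma timeDeriv_timeDeriv_comp_spatialJet_innerDeformation (hF : ContDiff ℝ 2 F)
    (hu : ContDiff ℝ 3 u) (x : Fin N → ℝ) :
    timeDeriv (timeDeriv (F ∘ spatialJet (innerDeformation Φ u))) (0, x)
      = secondVariationDensity F u (fun z => ∑ i, pdv u i z * η z i) x
        + firstVariationDensity F u (X0 u η ζ) x := by
  set g := innerDeformation Φ u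
  have hg : ContDiffAt ℝ 3 g (0, x) := contDiffAt_innerDeformation hΦ hinj le_rfl hu x
  have hvelocity : timeDeriv (spatialJet g) (0, x)
      = -jet (fun z => ∑ i, pdv u i z * η z i) x := by
    rw [timeDeriv_spatialJet (hg.of_le (by norm_num)), ← jet_neg]
    simp only [spatialJet, g,
      timeDeriv_innerDeformation_eq_neg_sum hΦ hinj (hu.of_le (by norm_num))]
  have hacceleration : timeDeriv (timeDeriv (spatialJet g)) (0, x) = jet (X0 u η ζ) x := by
    rw [timeDeriv_timeDeriv_spatialJet hg]
    simp only [spatialJet, g,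
      timeDeriv_timeDeriv_innerDeformation_eq_X0 hΦ hinj (hu.of_le (by norm_num))]
  rw [timeDeriv_timeDeriv_comp hF.contDiffAt (contDiffAt_spatialJet hg (by norm_num)),
    spatialJet_innerDeformation_zero hΦ, hvelocity, hacceleration,
    secondVariationDensity_eq_fderiv hF, firstVariationDensity_eq_fderiv]
  simp only [map_neg, _root_.neg_apply, neg_neg]

end SecondInnerVariation

theorem second_inner_variation_direct_general {N : ℕ} {Ω : Set (Fin N → ℝ)}
    (hΩ : Bornology.IsBounded Ω) {F : ℝ × (Fin N → ℝ) → ℝ} (hF : ContDiff ℝ 2 F)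
    {u : (Fin N → ℝ) → ℝ} (hu : ContDiff ℝ 3 u)
    {Φ : ℝ → (Fin N → ℝ) → (Fin N → ℝ)} {η ζ : (Fin N → ℝ) → (Fin N → ℝ)}
    (hΦ : IsDeformation Φ η ζ) (hinj : ∀ᶠ t in 𝓝 0, Function.Injective (Φ t)) :
    ∃ A1' : ℝ → ℝ,
      (∀ᶠ t in 𝓝 (0 : ℝ), HasDerivAt (innerA Ω F u Φ) (A1' t) t) ∧
      HasDerivAt A1'
        ((∫ x in Ω, secondVariationDensity F u (fun z => ∑ i, pdv u i z * η z i) x)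
          + ∫ x in Ω, firstVariationDensity F u (X0 u η ζ) x) 0 := by
  set G := F ∘ spatialJet (innerDeformation Φ u)
  have hG : ∀ y, ContDiffAt ℝ 2 G (0, y) := fun y => hF.contDiffAt.comp _
    (contDiffAt_spatialJet (contDiffAt_innerDeformation hΦ hinj le_rfl hu y) (by norm_num))
  have hK : IsCompact (closure Ω) := hΩ.isCompact_closure
  have hintegrable : ∀ {f : (Fin N → ℝ) → ℝ}, Continuous f → IntegrableOn f Ω := fun hf =>
    (hf.continuousOn.integrableOn_compact hK).mono_set subset_closure
  have hφ : ContDiff ℝ 1 fun z => ∑ i, pdv u i z * η z i := by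
    simp only [sum_pdv_mul]
    exact (hu.fderiv_right (by norm_num)).clm_apply (hΦ.contDiff_velocity.of_le one_le_two)
  have hu1 : ContDiff ℝ 1 u := hu.of_le (by norm_num)
  refine ⟨fun t => ∫ y in Ω, timeDeriv G (t, y), ?_, ?_⟩
  · rw [innerA_eq_setIntegral]
    exact eventually_hasDerivAt_setIntegral hK subset_closure
      fun y _ => (hG y).of_le one_le_two
  · rw [← integral_add (hintegrable (continuous_secondVariationDensity hF hu1 hφ))
      (hintegrable (continuous_firstVariationDensity (hF.of_le one_le_two) hu1
        (contDiff_X0 hΦ hinj hu)))]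
    simp only [← timeDeriv_timeDeriv_comp_spatialJet_innerDeformation hΦ hinj hF hu]
    exact hasDerivAt_setIntegral hK subset_closure
      fun y _ => contDiffAt_timeDeriv (hG y) (by norm_num)

lemma isDeformation_quadratic {E : Type*} [NormedAddCommGroup E] [NormedSpace ℝ E] {η ζ : E → E}
    (hη : ContDiff ℝ 3 η) (hζ : ContDiff ℝ 3 ζ) :
    IsDeformation (fun t x => x + t • η x + (t ^ 2 / 2) • ζ x) η ζ := by
  have hderiv : ∀ x t, HasDerivAt (fun t : ℝ => x + t • η x + (t ^ 2 / 2) • ζ x)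
      (η x + t • ζ x) t := fun x t => by
    convert! (((hasDerivAt_id t).smul_const (η x)).const_add x).add
      ((((hasDerivAt_id t).pow 2).div_const 2).smul_const (ζ x)) using 1
    simp
  refine ⟨fun x => ContDiff.contDiffAt ?_, fun x => by simp, fun x => ?_, fun x => ?_⟩
  · simp only [Function.uncurry_def]
    fun_prop
  · simpa using (hderiv x 0).deriv
  · rw [funext fun t => (hderiv x t).deriv]
    simpa using (((hasDerivAt_id (0 : ℝ)).smul_const (ζ x)).const_add (η x)).deriv

/-- Second inner variation via direct calculation: with
`𝔄₁(t) := ∫_Ω F(u_t, ∇u_t)` where `u_t = u ∘ Φ_t⁻¹`, `𝔄₁` is twice differentiable at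
`t = 0` and `𝔄₁''(0)` equals
`∫_Ω [F_{zz}(∇u·η)² + 2∑_i F_{zp_i}(∇u·η)∂_i(∇u·η) + ∑_{i,j} F_{p_ip_j}∂_i(∇u·η)∂_j(∇u·η)]
  + ∫_Ω [F_z X₀ + ∑_i F_{p_i} ∂_i X₀]`. -/
theorem second_inner_variation_direct
    (N : ℕ) (Ω : Set (Fin N → ℝ)) (hΩo : IsOpen Ω) (hΩb : Bornology.IsBounded Ω)
    (F : ℝ × (Fin N → ℝ) → ℝ) (hF : ContDiff ℝ 3 F)
    (u : (Fin N → ℝ) → ℝ) (hu : ContDiff ℝ 3 u) (hub : BddUpTo 3 u)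
    (η ζ : (Fin N → ℝ) → (Fin N → ℝ))
    (hη : ContDiff ℝ 3 η) (hηb : BddUpTo 3 η)
    (hζ : ContDiff ℝ 3 ζ) (hζb : BddUpTo 3 ζ)
    (Φ : ℝ → (Fin N → ℝ) → (Fin N → ℝ))
    (hΦ : ∀ t x, Φ t x = x + t • η x + (t ^ 2 / 2) • ζ x)
    (τ : ℝ) (hτ : 0 < τ)
    (hbij : ∀ t : ℝ, |t| < τ → Function.Bijective (Φ t)) :
    ∃ A1' : ℝ → ℝ,
      (∀ᶠ t in 𝓝 (0 : ℝ), HasDerivAt (innerA Ω F u Φ) (A1' t) t) ∧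
      HasDerivAt A1'
        ((∫ x in Ω,
            (Fzz F (u x) (grad u x) * (∑ i, pdv u i x * η x i) ^ 2
              + 2 * ∑ i, Fzp F i (u x) (grad u x) * ((∑ j, pdv u j x * η x j)
                  * pdv (fun z => ∑ j, pdv u j z * η z j) i x)
              + ∑ i, ∑ j, Fpp F i j (u x) (grad u x)
                  * pdv (fun z => ∑ l, pdv u l z * η z l) i x
                  * pdv (fun z => ∑ l, pdv u l z * η z l) j x))
          + ∫ x in Ω,
              (Fz F (u x) (grad u x) * X0 u η ζ x
                + ∑ i, Fp F i (u x) (grad u x) * pdv (X0 u η ζ) i x)) 0 := by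
  obtain rfl : Φ = fun t x => x + t • η x + (t ^ 2 / 2) • ζ x := funext₂ hΦ
  have hinj : ∀ᶠ t in 𝓝 (0 : ℝ), Function.Injective fun x => x + t • η x + (t ^ 2 / 2) • ζ x :=
    (eventually_abs_sub_lt 0 hτ).mono fun t ht => (hbij t (by simpa using ht)).injective
  exact second_inner_variation_direct_general hΩb (hF.of_le (by norm_num)) hu
    (isDeformation_quadratic hη hζ) hinj

end PaperAC
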